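/- Let n ≥ 1, let S be a symmetric endomorphism of V with associated bilinear form s(X,Y) = g(S(X),Y), and set h = (1/n)·s − (tr(S)/(2n²))·g. Then every trace-free symmetric (0,2)-tensor T on V satisfies ⟨Ric_{h⧆g}(T), T⟩ = −⟨ST, T⟩. -/

import Mathlib

/-!
Write `h(X,Y) = g(HX,Y)` with `H = S/n - (tr S / 2n²) id`, which is symmetric. The curvature
operator of `h ⧆ g` is `R(X,Y)Z = h(X,Z)Y - g(Y,Z)HX + g(X,Z)HY - h(Y,Z)X`. Contracting it against
a symmetric trace-free `T` gives (`ricTerm_knProd`)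

`Ric(T)(X,Y) = n (T(HX,Y) + T(X,HY)) + 2 tr(H) T(X,Y) - 2 (∑ⱼ T(eⱼ,Heⱼ)) g(X,Y)`.

The last term is orthogonal to `T` because `T` is trace-free. Since `nH = S - (tr S / 2n) id` and
`tr H = tr S / 2n`, the multiples of `T` cancel, and what is left is `T(SX,Y) + T(X,SY)`, that is
`-(ST)(X,Y)`.
-/


open scoped RealInnerProductSpace BigOperators
open Finset

noncomputable section

variable {V : Type*} [NormedAddCommGroup V] [InnerProductSpace ℝ V]

/-- The action `(L T)(X₁,…,X_k) = −Σᵢ T(X₁,…,L(Xᵢ),…,X_k)` of a map `L : V → V`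
on a `(0,k)`-tensor `T`. -/
def tact {k : ℕ} (L : V → V) (T : (Fin k → V) → ℝ) (X : Fin k → V) : ℝ :=
  -∑ i, T (Function.update X i (L (X i)))

/-- The Kulkarni–Nomizu product of two bilinear forms. -/
def knProd (s₁ s₂ : V → V → ℝ) (X Y Z W : V) : ℝ :=
  s₁ X Z * s₂ Y W - s₁ X W * s₂ Y Z + s₁ Y W * s₂ X Z - s₁ Y Z * s₂ X W

/-- The inner product `g` as a bilinear form. -/
def gf (X Y : V) : ℝ := ⟪X, Y⟫

/-- The curvature endomorphism `R(X,Y)`, determined by `g(R(X,Y)Z,W) = R(X,Y,Z,W)`,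
expressed via the orthonormal basis `e`. -/
def curvOp {n : ℕ} (e : Fin n → V) (R : V → V → V → V → ℝ) (X Y Z : V) : V :=
  ∑ a, R X Y Z (e a) • e a

/-- The curvature term `Ric_R(T)(X₁,…,X_k) = Σᵢ Σⱼ ((R(Xᵢ,eⱼ))T)(X₁,…,eⱼ,…,X_k)`. -/
def ricTerm {n k : ℕ} (e : Fin n → V) (R : V → V → V → V → ℝ)
    (T : (Fin k → V) → ℝ) (X : Fin k → V) : ℝ :=
  ∑ i : Fin k, ∑ j : Fin n, tact (curvOp e R (X i) (e j)) T (Function.update X i (e j))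

/-- The inner product of two `(0,k)`-tensors with respect to the orthonormal basis `e`. -/
def tinner {n k : ℕ} (e : Fin n → V) (S T : (Fin k → V) → ℝ) : ℝ :=
  ∑ I : Fin k → Fin n, S (fun m => e (I m)) * T (fun m => e (I m))

/-- The skew endomorphism `(A ∧ B)Z = g(A,Z)B − g(B,Z)A`. -/
def wedgeOp (A B Z : V) : V := ⟪A, Z⟫ • B - ⟪B, Z⟫ • A

theorem curvOp_knProd {n : ℕ} (e : OrthonormalBasis (Fin n) ℝ V) (H : V →ₗ[ℝ] V)
    (h : V → V → ℝ) (hH : ∀ X Y : V, h X Y = ⟪H X, Y⟫) (X Y Z : V) :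
    curvOp ⇑e (knProd h gf) X Y Z =
      h X Z • Y - ⟪Y, Z⟫ • H X + ⟪X, Z⟫ • H Y - h Y Z • X := by
  rw [← e.sum_repr' (h X Z • Y - ⟪Y, Z⟫ • H X + ⟪X, Z⟫ • H Y - h Y Z • X)]
  unfold curvOp
  refine Finset.sum_congr rfl fun a _ => ?_
  congr 1
  simp only [knProd, gf, hH, inner_add_right, inner_sub_right, inner_smul_right]
  rw [real_inner_comm Y (e a), real_inner_comm X (e a), real_inner_comm (H X) (e a),
    real_inner_comm (H Y) (e a)]
  ring

theorem sum_inner_mul {n : ℕ} (e : OrthonormalBasis (Fin n) ℝ V) (f : V →ₗ[ℝ] ℝ) (X : V) :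
    ∑ j, ⟪X, e j⟫ * f (e j) = f X := by
  conv_rhs => rw [← e.sum_repr' X]
  simp [real_inner_comm]

theorem update_pair_zero (X Y Z : V) : Function.update ![X, Y] 0 Z = ![Z, Y] := by
  ext i; fin_cases i <;> simp

theorem update_pair_one (X Y Z : V) : Function.update ![X, Y] 1 Z = ![X, Z] := by
  ext i; fin_cases i <;> simp

theorem tact_two (L : V → V) (T : (Fin 2 → V) → ℝ) (X Y : V) :
    tact L T ![X, Y] = -(T ![L X, Y] + T ![X, L Y]) := by
  simp only [tact, Fin.sum_univ_two, Matrix.cons_val_zero, Matrix.cons_val_one,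
    update_pair_zero, update_pair_one]

theorem tinner_two {n : ℕ} (e : Fin n → V) (S T : (Fin 2 → V) → ℝ) :
    tinner e S T = ∑ a, ∑ b, S ![e a, e b] * T ![e a, e b] := by
  unfold tinner
  rw [← (finTwoArrowEquiv (Fin n)).symm.sum_comp, Fintype.sum_prod_type]
  refine Finset.sum_congr rfl fun a _ => Finset.sum_congr rfl fun b _ => ?_
  have : (fun m => e ((finTwoArrowEquiv (Fin n)).symm (a, b) m)) = ![e a, e b] := by
    ext i; fin_cases i <;> simp [finTwoArrowEquiv]
  rw [this]

/-- The curvature term of `h ⧆ g` on a symmetric trace-free `T`, where `T` is given through a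
curried bilinear form `B`. -/
theorem ricTerm_knProd {n : ℕ} (e : OrthonormalBasis (Fin n) ℝ V) (H : V →ₗ[ℝ] V)
    (hHsym : ∀ X Y : V, ⟪H X, Y⟫ = ⟪X, H Y⟫)
    (h : V → V → ℝ) (hH : ∀ X Y : V, h X Y = ⟪H X, Y⟫)
    (T : (Fin 2 → V) → ℝ) (B : V →ₗ[ℝ] V →ₗ[ℝ] ℝ) (hB : ∀ X Y : V, T ![X, Y] = B X Y)
    (hBsym : ∀ X Y : V, B X Y = B Y X) (hBtf : ∑ a, B (e a) (e a) = 0) (X Y : V) :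
    ricTerm ⇑e (knProd h gf) T ![X, Y] =
      n * (B (H X) Y + B X (H Y)) + 2 * (∑ a, ⟪H (e a), e a⟫) * B X Y
        - 2 * (∑ a, B (e a) (H (e a))) * ⟪X, Y⟫ := by
  -- The contraction that appears in each slot; the two slots differ by the symmetry of `B`.
  have key : ∀ X Y : V,
      ∑ j, (B (curvOp ⇑e (knProd h gf) X (e j) (e j)) Y
          + B (e j) (curvOp ⇑e (knProd h gf) X (e j) Y)) =
        -((n - 2) * B (H X) Y + (∑ a, ⟪H (e a), e a⟫) * B X Y + B (H X) Y + B X (H Y)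
          - (∑ a, B (e a) (H (e a))) * ⟪X, Y⟫) := by
    intro X Y
    have c1 : ∑ j, ⟪H X, e j⟫ * B (e j) Y = B (H X) Y := sum_inner_mul e (B.flip Y) (H X)
    have c2 : ∑ j, ⟪X, e j⟫ * B (H (e j)) Y = B (H X) Y :=
      sum_inner_mul e ((B.flip Y).comp H) X
    have c3 : ∑ j, ⟪e j, Y⟫ * B (e j) (H X) = B Y (H X) := by
      simpa [real_inner_comm] using sum_inner_mul e (B.flip (H X)) Y
    have c4 : ∑ j, ⟪H (e j), Y⟫ * B (e j) X = B (H Y) X := by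
      have := sum_inner_mul e (B.flip X) (H Y)
      simp only [hHsym _ Y]
      simpa [real_inner_comm] using this
    simp only [curvOp_knProd e H h hH, map_add, map_sub, map_smul, LinearMap.add_apply,
      LinearMap.sub_apply, LinearMap.smul_apply, smul_eq_mul, Finset.sum_add_distrib,
      Finset.sum_sub_distrib, c3]
    simp only [hH, c1, c2, c4, ← Finset.mul_sum, ← Finset.sum_mul, hBtf]
    simp only [real_inner_self_eq_norm_sq, e.norm_eq_one, Finset.sum_const, Finset.card_univ,
      Fintype.card_fin, hBsym Y (H X), hBsym (H Y) X]
    simp only [nsmul_eq_mul]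
    ring
  have k0 := key X Y
  have k1 := key Y X
  have e1 : ∑ j, (B (curvOp ⇑e (knProd h gf) Y (e j) X) (e j)
          + B X (curvOp ⇑e (knProd h gf) Y (e j) (e j))) =
      ∑ j, (B (curvOp ⇑e (knProd h gf) Y (e j) (e j)) X
          + B (e j) (curvOp ⇑e (knProd h gf) Y (e j) X)) :=
    Finset.sum_congr rfl fun j _ => by
      rw [hBsym X, hBsym (e j)]; ring
  simp only [ricTerm, Fin.sum_univ_two, update_pair_zero, update_pair_one, tact_two, hB,
    Matrix.cons_val_zero, Matrix.cons_val_one, Finset.sum_neg_distrib]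
  rw [e1, k0, k1, hBsym Y X, hBsym Y (H X), hBsym (H Y) X, real_inner_comm X Y]
  ring

/-- with `h = (1/n) s − (tr S / (2n²)) g`, every trace-free symmetric
`(0,2)`-tensor satisfies `⟨Ric_{h⧆g}(T), T⟩ = −⟨ST, T⟩`. -/
theorem stmt18 {n : ℕ} (hn : 1 ≤ n)
    (e : OrthonormalBasis (Fin n) ℝ V)
    (S : V →ₗ[ℝ] V) (hSsym : ∀ X Y : V, ⟪S X, Y⟫ = ⟪X, S Y⟫)
    (s : V → V → ℝ) (hs : ∀ X Y : V, s X Y = ⟪S X, Y⟫)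
    (h : V → V → ℝ)
    (hh : ∀ X Y : V, h X Y =
      (1 / (n : ℝ)) * s X Y -
        ((∑ a : Fin n, ⟪S (e a), e a⟫) / (2 * (n : ℝ) ^ 2)) * ⟪X, Y⟫)
    (T : MultilinearMap ℝ (fun _ : Fin 2 => V) ℝ)
    (hTsym : ∀ X Y : V, T ![X, Y] = T ![Y, X])
    (hTtf : (∑ a : Fin n, T ![e a, e a]) = 0) :
    tinner ⇑e (ricTerm ⇑e (knProd h gf) ⇑T) ⇑T = -(tinner ⇑e (tact ⇑S ⇑T) ⇑T) := by
  have hn0 : (n : ℝ) ≠ 0 := by positivity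
  obtain ⟨B, hB⟩ : ∃ B : V →ₗ[ℝ] V →ₗ[ℝ] ℝ, ∀ X Y : V, T ![X, Y] = B X Y :=
    ⟨LinearMap.mk₂ ℝ (fun X Y => T ![X, Y])
      (fun X X₂ Y => by
        simpa only [update_pair_zero, smul_eq_mul] using T.map_update_add ![X, Y] 0 X X₂)
      (fun c X Y => by
        simpa only [update_pair_zero, smul_eq_mul] using T.map_update_smul ![X, Y] 0 c X)
      (fun X Y Y₂ => by
        simpa only [update_pair_one, smul_eq_mul] using T.map_update_add ![X, Y] 1 Y Y₂)
      (fun c X Y => by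
        simpa only [update_pair_one, smul_eq_mul] using T.map_update_smul ![X, Y] 1 c Y), fun X Y => rfl⟩
  set τ : ℝ := ∑ a : Fin n, ⟪S (e a), e a⟫ with hτ
  obtain ⟨H, hHdef⟩ : ∃ H : V →ₗ[ℝ] V, ∀ X,
      H X = (1 / (n : ℝ)) • S X - (τ / (2 * (n : ℝ) ^ 2)) • X :=
    ⟨(1 / (n : ℝ)) • S - (τ / (2 * (n : ℝ) ^ 2)) • LinearMap.id, fun X => by simp⟩
  have hHh : ∀ X Y : V, h X Y = ⟪H X, Y⟫ := fun X Y => by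
    rw [hh, hs, hHdef, inner_sub_left, real_inner_smul_left, real_inner_smul_left]
  have hHsym : ∀ X Y : V, ⟪H X, Y⟫ = ⟪X, H Y⟫ := fun X Y => by
    simp only [hHdef, inner_sub_left, inner_sub_right, real_inner_smul_left,
      real_inner_smul_right, hSsym]
  have hBsym : ∀ X Y : V, B X Y = B Y X := fun X Y => by rw [← hB, ← hB, hTsym]
  have hBtf : ∑ a, B (e a) (e a) = 0 := by simpa only [hB] using hTtf
  have trH : ∑ a, ⟪H (e a), e a⟫ = τ / (2 * n) := by
    simp only [hHdef, inner_sub_left, real_inner_smul_left, Finset.sum_sub_distrib,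
      ← Finset.mul_sum, ← hτ, real_inner_self_eq_norm_sq, e.norm_eq_one, Finset.sum_const,
      Finset.card_univ, Fintype.card_fin, nsmul_eq_mul]
    field_simp
    ring
  -- The multiples of `T` coming from `nH` and from `tr H` cancel.
  have pointwise : ∀ X Y : V, ricTerm ⇑e (knProd h gf) ⇑T ![X, Y] =
      B (S X) Y + B X (S Y) - 2 * (∑ a, B (e a) (H (e a))) * ⟪X, Y⟫ := fun X Y => by
    rw [ricTerm_knProd e H hHsym h hHh T B hB hBsym hBtf, trH, hHdef X, hHdef Y]
    simp only [map_sub, map_smul, LinearMap.sub_apply, LinearMap.smul_apply, smul_eq_mul]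
    field_simp
    ring
  -- The metric is orthogonal to the trace-free tensor `T`.
  have orth : ∑ a, ∑ b, ⟪e a, e b⟫ * B (e a) (e b) = 0 := by
    rw [← hBtf]
    exact Finset.sum_congr rfl fun a _ => sum_inner_mul e (B (e a)) (e a)
  rw [tinner_two, tinner_two]
  simp only [pointwise, tact_two, hB, sub_mul, Finset.sum_sub_distrib, neg_mul,
    Finset.sum_neg_distrib, neg_neg]
  simp only [mul_assoc, ← Finset.mul_sum, orth]
  ring
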